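/- For t > s and α > 1/2, with λ: ℝ → (0,∞) bounded measurable, the covariance integral (1/Γ(α)²) ∫_{−∞}^{s} e^{−λ(t)(t−u) − λ(s)(s−u)} (t−u)^{α−1}(s−u)^{α−1} du equals (e^{−λ₋(t,s)(t−s)} (t−s)^{α−1/2}) / (√π Γ(α) (2λ₊(t,s))^{α−1/2}) · K_{α−1/2}(λ₊(t,s)(t−s)), where λ₊(t,s) = (λ(t)+λ(s))/2 and λ₋(t,s) = (λ(t)−λ(s))/2. -/

import Mathlib

open Real MeasureTheory

/-- Modified Bessel function of the second kind, via its integral representation. -/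
noncomputable def besselK (ν x : ℝ) : ℝ :=
  ∫ t in Set.Ioi (0 : ℝ), Real.exp (-x * Real.cosh t) * Real.cosh (ν * t)

lemma aux_cosh_ge (t : ℝ) : t ^ 2 / 2 ≤ Real.cosh t := by
  have h1 : Real.cosh |t| = 1 + 2 * Real.sinh (|t| / 2) ^ 2 := by
    have h := Real.cosh_two_mul (|t| / 2)
    rw [Real.cosh_sq, show 2 * (|t| / 2) = |t| by ring] at h
    linarith
  have h2 : |t| / 2 ≤ Real.sinh (|t| / 2) := Real.self_le_sinh_iff.2 (by positivity)
  have h3 : (|t| / 2) ^ 2 ≤ Real.sinh (|t| / 2) ^ 2 := by gcongr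
  rw [Real.cosh_abs] at h1
  have h4 : |t| ^ 2 = t ^ 2 := sq_abs t
  nlinarith

lemma aux_integrable (c ν : ℝ) (hc : 0 < c) :
    Integrable (fun t : ℝ => Real.exp (-c * Real.cosh t + ν * t)) := by
  have h := (integrable_exp_neg_mul_sq (show 0 < c / 4 by positivity)).const_mul
    (Real.exp (ν ^ 2 / c))
  refine h.mono' (by fun_prop) (Filter.Eventually.of_forall fun t => ?_)
  rw [Real.norm_eq_abs, abs_of_pos (Real.exp_pos _), ← Real.exp_add]
  apply Real.exp_le_exp.2
  have h1 := mul_le_mul_of_nonneg_left (aux_cosh_ge t) hc.le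
  have h2 : ν ^ 2 / c + c / 4 * t ^ 2 - ν * t = c * (ν / c - t / 2) ^ 2 := by
    field_simp
    ring
  have h3 : 0 ≤ c * (ν / c - t / 2) ^ 2 := by positivity
  nlinarith

lemma aux_even (c ν : ℝ) (hc : 0 < c) :
    ∫ t : ℝ, Real.exp (-c * Real.cosh t + ν * t)
      = ∫ t : ℝ, Real.exp (-c * Real.cosh t) * Real.cosh (ν * t) := by
  have h1 := aux_integrable c ν hc
  have h2 := aux_integrable c (-ν) hc
  have h3 : ∫ t : ℝ, Real.exp (-c * Real.cosh t + -ν * t)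
      = ∫ t : ℝ, Real.exp (-c * Real.cosh t + ν * t) := by
    rw [← integral_neg_eq_self]
    simp [Real.cosh_neg]
  have h4 : ∫ t : ℝ, Real.exp (-c * Real.cosh t) * Real.cosh (ν * t)
      = ∫ t : ℝ, (1 / 2) * (Real.exp (-c * Real.cosh t + ν * t)
          + Real.exp (-c * Real.cosh t + -ν * t)) := by
    congr 1
    ext t
    rw [Real.exp_add, Real.exp_add, Real.cosh_eq (ν * t), neg_mul ν t]
    ring
  rw [h4, integral_const_mul, integral_add h1 h2, h3]
  ring

lemma aux_bessel (c ν : ℝ) (hc : 0 < c) :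
    ∫ t : ℝ, Real.exp (-c * Real.cosh t + ν * t) = 2 * besselK ν c := by
  rw [aux_even c ν hc, besselK,
    ← integral_comp_abs (f := fun t => Real.exp (-c * Real.cosh t) * Real.cosh (ν * t))]
  congr 1
  ext t
  have : Real.cosh (ν * |t|) = Real.cosh (ν * t) := by
    rw [← Real.cosh_abs (ν * t), ← Real.cosh_abs (ν * |t|), abs_mul, abs_mul, abs_abs]
  rw [Real.cosh_abs, this]

lemma aux_half (c : ℝ) (hc : 0 < c) :
    ∫ t : ℝ, Real.exp (-c * Real.cosh t + -(1 / 2) * t)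
      = Real.exp (-c) * √(2 * π / c) := by
  rw [aux_even c _ hc]
  have hd : ∀ t ∈ (Set.univ : Set ℝ), HasDerivWithinAt (fun t : ℝ => 2 * Real.sinh (t / 2))
      (Real.cosh (t / 2)) Set.univ t := by
    intro t _
    have := ((hasDerivAt_id t).div_const 2).sinh.const_mul 2
    refine (this.congr_deriv ?_).hasDerivWithinAt
    simp only [id]
    ring
  have hinj : Set.InjOn (fun t : ℝ => 2 * Real.sinh (t / 2)) Set.univ := by
    intro a _ b _ hab
    have : Real.sinh (a / 2) = Real.sinh (b / 2) := by
      simpa using hab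
    have := Real.sinh_injective this
    linarith
  have hs := integral_image_eq_integral_abs_deriv_smul MeasurableSet.univ hd hinj
    (fun w => Real.exp (-c) * Real.exp (-(c / 2) * w ^ 2))
  have himg : (fun t : ℝ => 2 * Real.sinh (t / 2)) '' Set.univ = Set.univ := by
    rw [Set.image_univ, Set.range_eq_univ]
    intro w
    refine ⟨2 * Real.arsinh (w / 2), ?_⟩
    simp only [mul_div_cancel_left₀ _ (two_ne_zero' ℝ), Real.sinh_arsinh]
    ring
  rw [himg, setIntegral_univ, setIntegral_univ, integral_const_mul, integral_gaussian] at hs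
  rw [show 2 * π / c = π / (c / 2) by field_simp, hs]
  congr 1
  ext t
  have h1 : Real.cosh t = 1 + 2 * Real.sinh (t / 2) ^ 2 := by
    have h := Real.cosh_two_mul (t / 2)
    rw [Real.cosh_sq, show 2 * (t / 2) = t by ring] at h
    linarith
  rw [abs_of_pos (Real.cosh_pos _), smul_eq_mul, ← Real.exp_add, h1,
    show -(1 / 2) * t = -(t / 2) by ring, Real.cosh_neg, mul_comm]
  congr 2
  ring

/-- inner integral in `t` -/
lemma aux_inner (x q : ℝ) (hx : 0 < x) (hq : 0 < q) :
    ∫ t : ℝ, Real.exp (-x * Real.cosh t - t / 2 - x / 2 * Real.exp (-t) * q)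
      = √(2 * π / x) * (Real.exp (-x * √(1 + q)) / √(1 + q)) := by
  set y := √(1 + q) with hy
  have hy0 : 0 < y := by positivity
  have hy2 : y ^ 2 = 1 + q := Real.sq_sqrt (by positivity)
  rw [← integral_add_right_eq_self _ (Real.log y)]
  have h1 : ∀ t : ℝ, Real.exp (-x * Real.cosh (t + Real.log y) - (t + Real.log y) / 2
        - x / 2 * Real.exp (-(t + Real.log y)) * q)
      = (√y)⁻¹ * Real.exp (-(x * y) * Real.cosh t + -(1 / 2) * t) := by
    intro t
    have h2 : (√y)⁻¹ = Real.exp (-(Real.log y / 2)) := by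
      rw [Real.exp_neg, ← Real.log_sqrt hy0.le, Real.exp_log (by positivity)]
    rw [h2, ← Real.exp_add, Real.cosh_eq, Real.cosh_eq, neg_add, Real.exp_add, Real.exp_add,
      Real.exp_neg (Real.log y), Real.exp_log hy0]
    congr 1
    have h3 : q = y ^ 2 - 1 := by linarith
    rw [h3]
    field_simp
    ring
  simp_rw [h1]
  rw [integral_const_mul, aux_half _ (by positivity), show 2 * π / (x * y) = 2 * π / x / y by
    field_simp, Real.sqrt_div (by positivity)]
  have : √y * √y = y := Real.mul_self_sqrt hy0.le
  rw [show -(x * y) = -x * y by ring]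
  field_simp
  rw [Real.sq_sqrt hy0.le]

lemma aux_main (α x : ℝ) (hα : 1 / 2 < α) (hx : 0 < x) :
    Real.Gamma α * (2 * besselK (α - 1 / 2) x)
      = (x / 2) ^ α * √(2 * π / x) *
        ∫ q in Set.Ioi (0 : ℝ), q ^ (α - 1) * (Real.exp (-x * √(1 + q)) / √(1 + q)) := by
  have hα0 : 0 < α := by linarith
  set F : ℝ → ℝ → ℝ := fun t q =>
    q ^ (α - 1) * Real.exp (-x * Real.cosh t - t / 2 - x / 2 * Real.exp (-t) * q) with hF
  have hF' : ∀ t q, F t q = Real.exp (-x * Real.cosh t - t / 2) *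
      (q ^ (α - 1) * Real.exp (-(x / 2 * Real.exp (-t) * q))) := by
    intro t q
    rw [hF]
    simp only
    rw [sub_eq_add_neg (_ - _), Real.exp_add]
    ring
  have hgam : ∀ t, ∫ q in Set.Ioi (0 : ℝ), F t q
      = ((x / 2) ^ α)⁻¹ * Real.Gamma α * Real.exp (-x * Real.cosh t + (α - 1 / 2) * t) := by
    intro t
    simp_rw [hF']
    rw [integral_const_mul, Real.integral_rpow_mul_exp_neg_mul_Ioi hα0 (by positivity),
      one_div, Real.inv_rpow (by positivity), Real.mul_rpow (by positivity) (by positivity),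
      ← Real.exp_mul, mul_inv, ← Real.exp_neg]
    rw [show -x * Real.cosh t + (α - 1 / 2) * t = (-x * Real.cosh t - t / 2) + -(-t * α) by ring,
      Real.exp_add]
    ring
  have hmeas : Measurable (Function.uncurry F) := by
    rw [hF]
    unfold Function.uncurry
    fun_prop
  have hprod : Integrable (Function.uncurry F)
      ((volume : Measure ℝ).prod (volume.restrict (Set.Ioi (0 : ℝ)))) := by
    rw [integrable_prod_iff hmeas.aestronglyMeasurable]
    constructor
    · refine Filter.Eventually.of_forall fun t => ?_
      have := integrableOn_rpow_mul_exp_neg_mul_rpow (p := 1) (s := α - 1)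
        (b := x / 2 * Real.exp (-t)) (by linarith) one_pos (by positivity)
      have := this.const_mul (Real.exp (-x * Real.cosh t - t / 2))
      refine this.congr (Filter.Eventually.of_forall fun q => ?_)
      simp only [Function.uncurry, hF', Real.rpow_one, neg_mul]
    · have h := (aux_integrable x (α - 1 / 2) hx).const_mul (((x / 2) ^ α)⁻¹ * Real.Gamma α)
      refine h.congr (Filter.Eventually.of_forall fun t => ?_)
      simp only
      rw [← hgam t]
      refine setIntegral_congr_fun measurableSet_Ioi fun q hq => ?_
      have hq' : 0 < q := hq
      simp only [Function.uncurry, hF]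
      rw [Real.norm_of_nonneg (by positivity)]
  have hswap := integral_integral_swap hprod
  simp_rw [hgam] at hswap
  rw [integral_const_mul, aux_bessel x _ hx] at hswap
  have h2 : ∫ q in Set.Ioi (0 : ℝ), ∫ t : ℝ, F t q
      = ∫ q in Set.Ioi (0 : ℝ), √(2 * π / x) *
        (q ^ (α - 1) * (Real.exp (-x * √(1 + q)) / √(1 + q))) := by
    refine setIntegral_congr_fun measurableSet_Ioi fun q hq => ?_
    simp only [hF]
    rw [integral_const_mul, aux_inner x q hx hq]
    ring
  rw [h2, integral_const_mul] at hswap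
  have hxp : (x / 2) ^ α ≠ 0 := by positivity
  rw [mul_assoc, ← hswap]
  field_simp

lemma aux_subst (α x d : ℝ) (hd : 0 < d) :
    ∫ q in Set.Ioi (0 : ℝ), q ^ (α - 1) * (Real.exp (-x * √(1 + q)) / √(1 + q))
      = (4 / d ^ 2) ^ (α - 1) * (4 / d) * Real.exp (-x) *
        ∫ v in Set.Ioi (0 : ℝ), Real.exp (-(2 * x / d) * v) * (d + v) ^ (α - 1) * v ^ (α - 1) := by
  set f : ℝ → ℝ := fun v => 4 / d ^ 2 * (v * (d + v)) with hf
  have hder : ∀ v ∈ Set.Ioi (0 : ℝ), HasDerivWithinAt f (4 / d ^ 2 * (d + 2 * v)) (Set.Ioi 0) v := by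
    intro v _
    have := ((hasDerivAt_id v).mul ((hasDerivAt_id v).const_add d)).const_mul (4 / d ^ 2)
    refine (this.congr_deriv ?_).hasDerivWithinAt
    simp only [id]
    ring
  have hsq : ∀ v, 1 + f v = ((d + 2 * v) / d) ^ 2 := by
    intro v
    simp only [hf]
    field_simp
    ring
  have hsqrt : ∀ v, 0 < v → √(1 + f v) = (d + 2 * v) / d := by
    intro v hv
    rw [hsq, Real.sqrt_sq (by positivity)]
  have hinj : Set.InjOn f (Set.Ioi 0) := by
    intro a ha b hb hab
    have h1 := hsqrt a ha
    rw [hab, hsqrt b hb] at h1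
    field_simp at h1
    linarith
  have himg : f '' Set.Ioi 0 = Set.Ioi 0 := by
    ext q
    constructor
    · rintro ⟨v, hv, rfl⟩
      have hv' : 0 < v := hv
      simp only [hf, Set.mem_Ioi]
      positivity
    · intro hq
      have hq' : 0 < q := hq
      have h2 : √(1 + q) ^ 2 = 1 + q := Real.sq_sqrt (by positivity)
      have h1 : 1 < √(1 + q) := by
        rw [Real.lt_sqrt (by norm_num)]
        linarith
      refine ⟨d / 2 * (√(1 + q) - 1), ?_, ?_⟩
      · have h3 : 0 < √(1 + q) - 1 := by linarith
        have h4 : 0 < d / 2 * (√(1 + q) - 1) := by positivity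
        exact h4
      · have h5 := hsq (d / 2 * (√(1 + q) - 1))
        have h6 : (d + 2 * (d / 2 * (√(1 + q) - 1))) / d = √(1 + q) := by
          field_simp
          ring
        rw [h6, h2] at h5
        linarith
  have hs := integral_image_eq_integral_abs_deriv_smul measurableSet_Ioi hder hinj
    (fun q => q ^ (α - 1) * (Real.exp (-x * √(1 + q)) / √(1 + q)))
  rw [himg] at hs
  rw [hs, ← integral_const_mul]
  refine setIntegral_congr_fun measurableSet_Ioi fun v hv => ?_
  have hv' : 0 < v := hv
  simp only [smul_eq_mul]
  rw [hsqrt v hv', abs_of_pos (by positivity)]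
  simp only [hf]
  rw [Real.mul_rpow (by positivity) (by positivity), Real.mul_rpow (by positivity) (by positivity),
    show -x * ((d + 2 * v) / d) = -x + -(2 * x / d) * v by field_simp; ring, Real.exp_add]
  field_simp

theorem stmt15 (α : ℝ) (hα : 1/2 < α) (lam : ℝ → ℝ) (hpos : ∀ x, 0 < lam x)
    (hbdd : ∃ M, ∀ x, lam x ≤ M) (hmeas : Measurable lam)
    (t s : ℝ) (hts : s < t) :
    (1 / Real.Gamma α ^ 2) *
        ∫ u in Set.Iic s,
          Real.exp (-(lam t) * (t - u) - (lam s) * (s - u)) *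
            (t - u) ^ (α - 1) * (s - u) ^ (α - 1)
      = Real.exp (-((lam t - lam s)/2) * (t - s)) * (t - s) ^ (α - 1/2)
          / (Real.sqrt π * Real.Gamma α * (2 * ((lam t + lam s)/2)) ^ (α - 1/2))
          * besselK (α - 1/2) (((lam t + lam s)/2) * (t - s)) := by
  have hd : 0 < t - s := by linarith
  have hL : 0 < (lam t + lam s) / 2 := by
    have := hpos t
    have := hpos s
    positivity
  have hG : 0 < Real.Gamma α := Real.Gamma_pos_of_pos (by linarith)
  have hI : ∫ u in Set.Iic s,
          Real.exp (-(lam t) * (t - u) - (lam s) * (s - u)) *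
            (t - u) ^ (α - 1) * (s - u) ^ (α - 1)
      = Real.exp (-(lam t) * (t - s)) * ∫ v in Set.Ioi (0 : ℝ),
        Real.exp (-(2 * ((lam t + lam s) / 2 * (t - s)) / (t - s)) * v)
          * (t - s + v) ^ (α - 1) * v ^ (α - 1) := by
    rw [← integral_const_mul, ← integral_indicator measurableSet_Iic,
      ← integral_sub_left_eq_self _ volume s, ← integral_Ici_eq_integral_Ioi,
      ← integral_indicator measurableSet_Ici]
    congr 1
    ext v
    by_cases hv : 0 ≤ v
    · rw [Set.indicator_of_mem (by simpa using hv), Set.indicator_of_mem (by simpa using hv)]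
      rw [show t - (s - v) = t - s + v by ring, show s - (s - v) = v by ring,
        ← mul_assoc, ← mul_assoc, ← Real.exp_add]
      congr 3
      field_simp
      ring
    · rw [Set.indicator_of_notMem (by simpa using hv), Set.indicator_of_notMem (by simpa using hv)]
  rw [hI]
  generalize hLL : (lam t + lam s) / 2 = L at *
  generalize hdd : t - s = d at *
  have hm := aux_main α (L * d) hα (by positivity)
  rw [aux_subst α (L * d) d hd] at hm
  generalize (∫ v in Set.Ioi (0 : ℝ),
        Real.exp (-(2 * (L * d) / d) * v) * (d + v) ^ (α - 1) * v ^ (α - 1)) = I at *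
  generalize besselK (α - 1 / 2) (L * d) = K at *
  have he : Real.exp (-((lam t - lam s) / 2) * d)
      = Real.exp (-(lam t) * d) * Real.exp (L * d) := by
    rw [← Real.exp_add, ← hLL]
    congr 1
    ring
  have hc : (L * d / 2) ^ α * √(2 * π / (L * d)) * ((4 / d ^ 2) ^ (α - 1) * (4 / d))
      = 2 * √π * (2 * L) ^ (α - 1 / 2) / d ^ (α - 1 / 2) := by
    have hdne := hd.ne'
    have hLne := hL.ne'
    have hπ := Real.pi_pos.ne'
    apply Real.log_injOn_pos
    · rw [Set.mem_Ioi]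
      positivity
    · rw [Set.mem_Ioi]
      positivity
    rw [Real.log_mul (by positivity) (by positivity), Real.log_mul (by positivity) (by positivity),
      Real.log_mul (by positivity) (by positivity), Real.log_rpow (by positivity),
      Real.log_rpow (by positivity), Real.log_sqrt (by positivity),
      Real.log_div (by positivity) (by positivity), Real.log_div (by positivity) (by positivity),
      Real.log_div (by positivity) (by positivity), Real.log_div (by positivity) (by positivity),
      Real.log_div (by positivity) (by positivity), Real.log_mul (by positivity) (by positivity),
      Real.log_mul (by positivity) (by positivity), Real.log_mul (by positivity) (by positivity),
      Real.log_mul (by positivity) (by positivity), Real.log_rpow (by positivity),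
      Real.log_rpow (by positivity), Real.log_sqrt (by positivity),
      Real.log_mul (by positivity) (by positivity), Real.log_pow,
      show (4 : ℝ) = 2 ^ 2 by norm_num, Real.log_pow]
    push_cast
    ring
  have hK : K = √π * (2 * L) ^ (α - 1 / 2) / d ^ (α - 1 / 2) * Real.exp (-(L * d)) * I
      / Real.Gamma α := by
    rw [eq_div_iff hG.ne']
    have : Real.Gamma α * (2 * K) = ((L * d / 2) ^ α * √(2 * π / (L * d)) *
      ((4 / d ^ 2) ^ (α - 1) * (4 / d))) * Real.exp (-(L * d)) * I := by rw [hm]; ring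
    rw [hc] at this
    linear_combination this / 2
  rw [hK, he, Real.exp_neg]
  have h1 : d ^ (α - 1 / 2) ≠ 0 := by positivity
  have h2 : (2 * L) ^ (α - 1 / 2) ≠ 0 := by positivity
  field_simp
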